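/- arXiv:1906.00326 — 4 statements merged into one kernel-verified Lean document; each statement's English description precedes it below -/
import Mathlib

section
/- Let n, K, w be integers with 1 ≤ K, 0 ≤ w ≤ K, and n ≥ 64K, and let p_w be the unique univariate real polynomial of degree at most K with p_w(1 − 2h/n) = C(K,w)·C(n−K,h−w)/C(n,h) for every integer 0 ≤ h ≤ n. Then |p_w(t)| ≤ 2 for all t ∈ [−1, 1]. -/
/-- The probability that a uniformly random string in `{0,1}^n` of Hamming weight `h`
has exactly `w` ones among its first `K` coordinates: `C(K,w)·C(n-K,h-w)/C(n,h)`,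
where out-of-range binomial coefficients are `0`. -/
noncomputable def pval (n K w h : ℕ) : ℝ :=
  if w ≤ h then (K.choose w : ℝ) * ((n - K).choose (h - w) : ℝ) / (n.choose h : ℝ) else 0

/-!
Write `K = a + b` with `a = w`, and let `(y)_k` be the falling factorial. In the variable
`x = n (1 - t) / 2 ∈ [0, n]` the polynomial is `G(x) = C(a+b, a) (x)_a (n - x)_b / (n)_{a+b}`.

For `x ≤ a`, and symmetrically for `n - x ≤ b`, the estimate `|(x)_a| ≤ a!` gives `|G(x)| ≤ 1`.
In between `G` is positive and log-concave, and `log G ≤ 0` at integers because `G` is a probability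
there. For `h ≤ x ≤ h + 1` and `s = x - h`, the tangents to `log G` at `h` and at `h + 1` give
`log G(x) ≤ s L(h)` and `log G(x) ≤ -(1 - s) L(h + 1)`, where `L` is the derivative of `log G`.
Averaging these with weights `1 - s` and `s` yields `log G(x) ≤ s (1 - s) (L(h) - L(h + 1))`. Each
of the two sums of reciprocals making up `L` telescopes to a contribution of at most `1` in
`L(h) - L(h + 1)`, so `log G(x) ≤ 2 · 1/4 < log 2`.
-/

open Finset Polynomial

theorem abs_descPochhammer_eval_le_factorial (k : ℕ) {x : ℝ} (hx₀ : -1 ≤ x) (hxk : x ≤ k) :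
    |(descPochhammer ℝ k).eval x| ≤ k.factorial := by
  induction k generalizing x with
  | zero => simp
  | succ k ih =>
    rw [Nat.factorial_succ, mul_comm]
    push_cast at hxk ⊢
    rcases le_total x k with hx | hx
    · rw [descPochhammer_succ_eval, abs_mul]
      have hlast : |x - k| ≤ k + 1 := abs_le.2 ⟨by linarith, by linarith⟩
      exact mul_le_mul (ih hx₀ hx) hlast (abs_nonneg _) (by positivity)
    · have hx₀' : 0 ≤ x := k.cast_nonneg.trans hx
      have hsplit : (descPochhammer ℝ (k + 1)).eval x
          = (descPochhammer ℝ k).eval (x - 1) * x := by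
        simp [descPochhammer_succ_left, mul_comm]
      rw [hsplit, abs_mul, abs_of_nonneg hx₀']
      exact mul_le_mul (ih (by linarith) (by linarith)) hxk hx₀' (by positivity)

/-- The logarithmic derivative `∑_{i < k} 1 / (y - i)` of the falling factorial
`y (y - 1) ⋯ (y - k + 1)`. It is meaningful away from the roots `0, …, k - 1`, where the summand
`1 / 0` is read as `0`. -/
noncomputable def descPochhammerLogDeriv (k : ℕ) (y : ℝ) : ℝ :=
  ∑ i ∈ range k, 1 / (y - i)

theorem log_descPochhammer_eval_le_tangent {k : ℕ} {x y : ℝ} (hx : (k : ℝ) - 1 < x)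
    (hy : (k : ℝ) - 1 < y) :
    Real.log ((descPochhammer ℝ k).eval x)
      ≤ Real.log ((descPochhammer ℝ k).eval y) + (x - y) * descPochhammerLogDeriv k y := by
  have factor_pos {z : ℝ} (hz : (k : ℝ) - 1 < z) : ∀ i ∈ range k, 0 < z - i := fun i hi ↦ by
    have : (i : ℝ) + 1 ≤ k := mod_cast mem_range.1 hi
    linarith
  rw [descPochhammer_eval_eq_prod_range, descPochhammer_eval_eq_prod_range,
    Real.log_prod fun i hi ↦ (factor_pos hx i hi).ne',
    Real.log_prod fun i hi ↦ (factor_pos hy i hi).ne',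
    descPochhammerLogDeriv, mul_sum, ← sum_add_distrib]
  refine sum_le_sum fun i hi ↦ ?_
  have hxi := factor_pos hx i hi
  have hyi := factor_pos hy i hi
  have hlog : Real.log ((x - i) / (y - i)) ≤ (x - i) / (y - i) - 1 :=
    Real.log_le_sub_one_of_pos (div_pos hxi hyi)
  rw [Real.log_div hxi.ne' hyi.ne'] at hlog
  have hratio : (x - i) / (y - i) - 1 = (x - y) * (1 / (y - i)) := by
    field_simp
    ring
  linarith

theorem descPochhammerLogDeriv_sub_add_one (k : ℕ) (y : ℝ) :
    descPochhammerLogDeriv k y - descPochhammerLogDeriv k (y + 1)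
      = 1 / (y + 1 - k) - 1 / (y + 1) := by
  have htelescope := sum_range_sub (fun i : ℕ ↦ 1 / (y + 1 - i)) k
  simpa [descPochhammerLogDeriv, ← sum_sub_distrib] using htelescope

theorem descPochhammerLogDeriv_sub_add_one_le_one {k : ℕ} {y : ℝ} (hk : (k : ℝ) ≤ y) :
    descPochhammerLogDeriv k y - descPochhammerLogDeriv k (y + 1) ≤ 1 := by
  have hy : 0 ≤ y := k.cast_nonneg.trans hk
  have hfirst : 1 / (y + 1 - k) ≤ 1 := div_le_one_of_le₀ (by linarith) (by linarith)
  have hlast : 0 ≤ 1 / (y + 1) := by positivity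
  rw [descPochhammerLogDeriv_sub_add_one]
  linarith

theorem pval_le_one {n K : ℕ} (hK : K ≤ n) (w h : ℕ) : pval n K w h ≤ 1 := by
  unfold pval
  split_ifs with hwh
  · have hvandermonde := Nat.add_choose_eq K (n - K) h
    rw [Nat.add_sub_cancel' hK] at hvandermonde
    have hterm : K.choose w * (n - K).choose (h - w) ≤ n.choose h := by
      rw [hvandermonde]
      exact single_le_sum (f := fun ij : ℕ × ℕ ↦ K.choose ij.1 * (n - K).choose ij.2)
        (fun _ _ ↦ Nat.zero_le _) (a := (w, h - w)) (mem_antidiagonal.2 (by omega))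
    exact div_le_one_of_le₀ (mod_cast hterm) (Nat.cast_nonneg _)
  · exact zero_le_one

theorem descFactorial_mul_descFactorial_mul_choose (a b u v : ℕ) :
    (a + u).descFactorial a * (b + v).descFactorial b * (a + b + (u + v)).choose (a + u)
      = (u + v).choose u * (a + b + (u + v)).descFactorial (a + b) := by
  have hdesc (k m : ℕ) : m.factorial * (k + m).descFactorial k = (k + m).factorial := by
    simpa using Nat.factorial_mul_descFactorial (Nat.le_add_right k m)
  have hchoose (k m : ℕ) :
      (k + m).choose k * k.factorial * m.factorial = (k + m).factorial := by
    simpa using Nat.choose_mul_factorial_mul_factorial (Nat.le_add_right k m)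
  apply Nat.eq_of_mul_eq_mul_left (Nat.mul_pos u.factorial_pos v.factorial_pos)
  calc u.factorial * v.factorial * ((a + u).descFactorial a * (b + v).descFactorial b
          * (a + b + (u + v)).choose (a + u))
      = (a + b + (u + v)).choose (a + u) * (u.factorial * (a + u).descFactorial a)
          * (v.factorial * (b + v).descFactorial b) := by ring
    _ = (a + b + (u + v)).factorial := by
        rw [hdesc, hdesc, add_add_add_comm, hchoose]
    _ = (u + v).choose u * u.factorial * v.factorial
          * (a + b + (u + v)).descFactorial (a + b) := by rw [hchoose, hdesc]
    _ = _ := by ring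

/-- The polynomial `C(a+b, a) (X)_a (n - X)_b / (n)_{a+b}`, where `(y)_k` is the falling factorial.
At an integer `0 ≤ h ≤ n` it is the hypergeometric probability `pval n (a + b) a h`. -/
noncomputable def hypergeometricPoly (n a b : ℕ) : ℝ[X] :=
  C (((a + b).choose a : ℝ) / n.descFactorial (a + b)) *
    (descPochhammer ℝ a * (descPochhammer ℝ b).comp (C (n : ℝ) - X))

section HypergeometricPoly

variable {n a b : ℕ}

theorem natDegree_hypergeometricPoly_le (n a b : ℕ) :
    (hypergeometricPoly n a b).natDegree ≤ a + b := by
  have hlinear : (C (n : ℝ) - X).natDegree ≤ 1 := by compute_degree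
  have hcomp : ((descPochhammer ℝ b).comp (C (n : ℝ) - X)).natDegree ≤ b := by
    refine natDegree_comp_le.trans ?_
    rw [descPochhammer_natDegree]
    exact mul_le_of_le_one_right' hlinear
  refine (natDegree_C_mul_le _ _).trans (natDegree_mul_le.trans (add_le_add ?_ hcomp))
  exact (descPochhammer_natDegree ℝ a).le

theorem eval_hypergeometricPoly (n a b : ℕ) (x : ℝ) :
    (hypergeometricPoly n a b).eval x = ((a + b).choose a : ℝ) / n.descFactorial (a + b) *
      ((descPochhammer ℝ a).eval x * (descPochhammer ℝ b).eval (n - x)) := by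
  simp [hypergeometricPoly]

theorem eval_hypergeometricPoly_symm (n a b : ℕ) (x : ℝ) :
    (hypergeometricPoly n a b).eval x = (hypergeometricPoly n b a).eval (n - x) := by
  rw [eval_hypergeometricPoly, eval_hypergeometricPoly, sub_sub_cancel, add_comm b a,
    Nat.choose_symm_add]
  ring

theorem eval_hypergeometricPoly_natCast {h : ℕ} (hab : a + b ≤ n) (hh : h ≤ n) :
    (hypergeometricPoly n a b).eval (h : ℝ) = pval n (a + b) a h := by
  rw [eval_hypergeometricPoly, ← Nat.cast_sub hh, descPochhammer_eval_eq_descFactorial,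
    descPochhammer_eval_eq_descFactorial, pval]
  split_ifs with hah
  · rcases le_or_gt b (n - h) with hb | hb
    · obtain ⟨u, rfl⟩ := Nat.exists_eq_add_of_le hah
      obtain ⟨v, hv⟩ := Nat.exists_eq_add_of_le hb
      obtain rfl : n = a + b + (u + v) := by omega
      have hdesc : ((a + b + (u + v)).descFactorial (a + b) : ℝ) ≠ 0 :=
        mod_cast (Nat.descFactorial_pos.2 hab).ne'
      have hchoose : ((a + b + (u + v)).choose (a + u) : ℝ) ≠ 0 :=
        mod_cast (Nat.choose_pos hh).ne'
      have hcount : ((a + u).descFactorial a : ℝ) * (b + v).descFactorial b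
          * (a + b + (u + v)).choose (a + u)
          = (u + v).choose u * (a + b + (u + v)).descFactorial (a + b) :=
        mod_cast descFactorial_mul_descFactorial_mul_choose a b u v
      rw [hv, Nat.add_sub_cancel_left, Nat.add_sub_cancel_left, div_mul_eq_mul_div,
        div_eq_div_iff hdesc hchoose]
      linear_combination ((a + b).choose a : ℝ) * hcount
    · rw [Nat.descFactorial_of_lt hb,
        Nat.choose_eq_zero_of_lt (show n - (a + b) < h - a by omega)]
      simp
  · simp [Nat.descFactorial_of_lt (not_le.1 hah)]

theorem abs_eval_hypergeometricPoly_le_one {x : ℝ} (hn : a + 2 * b ≤ n) (hx₀ : 0 ≤ x)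
    (hxa : x ≤ a) : |(hypergeometricPoly n a b).eval x| ≤ 1 := by
  have hn' : (a : ℝ) + 2 * b ≤ n := mod_cast hn
  have hmem : (n : ℝ) - x ∈ Set.Ici ((b : ℝ) - 1) :=
    Set.mem_Ici.2 (by linarith [b.cast_nonneg (α := ℝ)])
  have hdesc : (0 : ℝ) < n.descFactorial (a + b) :=
    mod_cast Nat.descFactorial_pos.2 (by omega)
  have hfirst : |(descPochhammer ℝ a).eval x| ≤ a.factorial :=
    abs_descPochhammer_eval_le_factorial a (by linarith) hxa
  have hsecond : |(descPochhammer ℝ b).eval (n - x)| ≤ n.descFactorial b := by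
    rw [abs_of_nonneg (descPochhammer_nonneg hmem), ← descPochhammer_eval_eq_descFactorial ℝ]
    have hle : (n : ℝ) - x ≤ n := sub_le_self _ hx₀
    exact monotoneOn_descPochhammer_eval b hmem (hmem.out.trans hle) hle
  have hcount : (a + b).choose a * (a.factorial * n.descFactorial b)
      ≤ n.descFactorial (a + b) := by
    calc (a + b).choose a * (a.factorial * n.descFactorial b)
        = (a + b).descFactorial a * n.descFactorial b := by
          rw [Nat.descFactorial_eq_factorial_mul_choose (a + b)]
          ring
      _ ≤ (n - b).descFactorial a * n.descFactorial b :=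
          Nat.mul_le_mul_right _ (Nat.descFactorial_le a (by omega))
      _ = n.descFactorial (a + b) := by
          simpa using Nat.descFactorial_mul_descFactorial (n := n) (Nat.le_add_left b a)
  rw [eval_hypergeometricPoly, div_mul_eq_mul_div, abs_div, abs_mul, abs_mul, Nat.abs_cast,
    Nat.abs_cast]
  refine div_le_one_of_le₀ ?_ hdesc.le
  calc _ ≤ ((a + b).choose a : ℝ) * (a.factorial * n.descFactorial b) := by gcongr
    _ ≤ n.descFactorial (a + b) := mod_cast hcount

/-- The logarithmic derivative of `hypergeometricPoly n a b`, for `y` off its roots. -/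
noncomputable def hypergeometricLogDeriv (n a b : ℕ) (y : ℝ) : ℝ :=
  descPochhammerLogDeriv a y - descPochhammerLogDeriv b (n - y)

theorem hypergeometricLogDeriv_sub_add_one_le_two {y : ℝ} (ha : (a : ℝ) ≤ y)
    (hb : (b : ℝ) ≤ n - (y + 1)) :
    hypergeometricLogDeriv n a b y - hypergeometricLogDeriv n a b (y + 1) ≤ 2 := by
  have hfirst := descPochhammerLogDeriv_sub_add_one_le_one ha
  have hsecond := descPochhammerLogDeriv_sub_add_one_le_one hb
  rw [show (n : ℝ) - (y + 1) + 1 = n - y by ring] at hsecond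
  unfold hypergeometricLogDeriv
  linarith

theorem eval_hypergeometricPoly_pos {x : ℝ} (hab : a + b ≤ n) (hxa : (a : ℝ) - 1 < x)
    (hxb : (b : ℝ) - 1 < n - x) : 0 < (hypergeometricPoly n a b).eval x := by
  have hchoose : (0 : ℝ) < (a + b).choose a := mod_cast Nat.choose_pos (Nat.le_add_right a b)
  have hdesc : (0 : ℝ) < n.descFactorial (a + b) := mod_cast Nat.descFactorial_pos.2 hab
  rw [eval_hypergeometricPoly]
  exact mul_pos (div_pos hchoose hdesc) (mul_pos (descPochhammer_pos hxa) (descPochhammer_pos hxb))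

theorem log_eval_hypergeometricPoly {x : ℝ} (hab : a + b ≤ n) (hxa : (a : ℝ) - 1 < x)
    (hxb : (b : ℝ) - 1 < n - x) :
    Real.log ((hypergeometricPoly n a b).eval x)
      = Real.log (((a + b).choose a : ℝ) / n.descFactorial (a + b))
        + (Real.log ((descPochhammer ℝ a).eval x)
          + Real.log ((descPochhammer ℝ b).eval (n - x))) := by
  have hpos := eval_hypergeometricPoly_pos hab hxa hxb
  rw [eval_hypergeometricPoly] at hpos ⊢
  rw [Real.log_mul (left_ne_zero_of_mul hpos.ne') (right_ne_zero_of_mul hpos.ne'),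
    Real.log_mul (descPochhammer_pos hxa).ne' (descPochhammer_pos hxb).ne']

theorem log_eval_hypergeometricPoly_le_tangent {x y : ℝ} (hab : a + b ≤ n) (hxa : (a : ℝ) - 1 < x)
    (hxb : (b : ℝ) - 1 < n - x) (hya : (a : ℝ) - 1 < y) (hyb : (b : ℝ) - 1 < n - y) :
    Real.log ((hypergeometricPoly n a b).eval x)
      ≤ Real.log ((hypergeometricPoly n a b).eval y)
        + (x - y) * hypergeometricLogDeriv n a b y := by
  have hfirst := log_descPochhammer_eval_le_tangent hxa hya
  have hsecond := log_descPochhammer_eval_le_tangent hxb hyb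
  rw [log_eval_hypergeometricPoly hab hxa hxb, log_eval_hypergeometricPoly hab hya hyb,
    hypergeometricLogDeriv]
  linarith

theorem log_eval_hypergeometricPoly_le_natCast_tangent {x : ℝ} {h : ℕ}
    (hxa : (a : ℝ) - 1 < x) (hxb : (b : ℝ) - 1 < n - x) (ha : a ≤ h) (hb : h + b ≤ n) :
    Real.log ((hypergeometricPoly n a b).eval x)
      ≤ (x - h) * hypergeometricLogDeriv n a b h := by
  have hab : a + b ≤ n := by omega
  have ha' : (a : ℝ) ≤ h := mod_cast ha
  have hb' : (h : ℝ) + b ≤ n := mod_cast hb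
  have htangent := log_eval_hypergeometricPoly_le_tangent hab hxa hxb (y := h)
    (by linarith) (by linarith)
  have hprob : (hypergeometricPoly n a b).eval (h : ℝ) ≤ 1 :=
    (eval_hypergeometricPoly_natCast hab (by omega)).trans_le (pval_le_one hab a h)
  have hpos : 0 < (hypergeometricPoly n a b).eval (h : ℝ) :=
    eval_hypergeometricPoly_pos hab (by linarith) (by linarith)
  linarith [Real.log_nonpos hpos.le hprob]

theorem log_eval_hypergeometricPoly_le_half {x : ℝ} (hxa : (a : ℝ) ≤ x) (hxb : (b : ℝ) < n - x) :
    Real.log ((hypergeometricPoly n a b).eval x) ≤ 1 / 2 := by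
  set h := ⌊x⌋₊
  have hhx : (h : ℝ) ≤ x := Nat.floor_le (a.cast_nonneg.trans hxa)
  have hxh : x < h + 1 := Nat.lt_floor_add_one x
  have hah : a ≤ h := Nat.le_floor hxa
  have hhb : h + b < n := by
    have : (h : ℝ) + b < n := by linarith
    exact_mod_cast this
  have hhb' : (h : ℝ) + b + 1 ≤ n := mod_cast hhb
  have hleft := log_eval_hypergeometricPoly_le_natCast_tangent (x := x)
    (by linarith) (by linarith) hah hhb.le
  have hright := log_eval_hypergeometricPoly_le_natCast_tangent (x := x)
    (by linarith) (by linarith) (show a ≤ h + 1 by omega) (show h + 1 + b ≤ n by omega)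
  have hdrop := hypergeometricLogDeriv_sub_add_one_le_two (n := n) (b := b)
    (show (a : ℝ) ≤ h by exact_mod_cast hah) (by linarith)
  push_cast at hright
  set s := x - h with hs
  set L := hypergeometricLogDeriv n a b
  calc Real.log ((hypergeometricPoly n a b).eval x)
      = (1 - s) * Real.log ((hypergeometricPoly n a b).eval x)
          + s * Real.log ((hypergeometricPoly n a b).eval x) := by ring
    _ ≤ (1 - s) * (s * L h) + s * ((x - (h + 1)) * L (h + 1)) := by
        gcongr
        linarith
    _ = s * (1 - s) * (L h - L (h + 1)) := by
        rw [hs]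
        ring
    _ ≤ s * (1 - s) * 2 :=
        mul_le_mul_of_nonneg_left hdrop (mul_nonneg (by linarith) (by linarith))
    _ ≤ 1 / 2 := by linarith [sq_nonneg (s - 1 / 2)]

theorem abs_eval_hypergeometricPoly_le_two {x : ℝ} (hna : a + 2 * b ≤ n) (hnb : b + 2 * a ≤ n)
    (hx₀ : 0 ≤ x) (hxn : x ≤ n) : |(hypergeometricPoly n a b).eval x| ≤ 2 := by
  rcases le_or_gt x a with hxa | hxa
  · linarith [abs_eval_hypergeometricPoly_le_one hna hx₀ hxa]
  rcases le_or_gt (n - x) b with hxb | hxb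
  · rw [eval_hypergeometricPoly_symm]
    linarith [abs_eval_hypergeometricPoly_le_one hnb (sub_nonneg.2 hxn) hxb]
  have hpos : 0 < (hypergeometricPoly n a b).eval x :=
    eval_hypergeometricPoly_pos (by omega) (by linarith) (by linarith)
  rw [abs_of_pos hpos, ← Real.log_le_log_iff hpos two_pos]
  linarith [log_eval_hypergeometricPoly_le_half hxa.le hxb, Real.log_two_gt_d9]

theorem eq_hypergeometricPoly_comp {p : ℝ[X]} (hn : 0 < n) (hab : a + b ≤ n)
    (hdeg : p.natDegree ≤ n)
    (hp : ∀ h : ℕ, h ≤ n → p.eval (1 - 2 * (h : ℝ) / (n : ℝ)) = pval n (a + b) a h) :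
    p = (hypergeometricPoly n a b).comp (C ((n : ℝ) / 2) * (1 - X)) := by
  have hn' : (n : ℝ) ≠ 0 := mod_cast hn.ne'
  apply eq_of_natDegree_lt_card_of_eval_eq _ _
    (f := fun h : Fin (n + 1) ↦ 1 - 2 * ((h : ℕ) : ℝ) / (n : ℝ))
  · intro i j hij
    simpa [hn', Fin.ext_iff] using hij
  · intro h
    have hnode : (n : ℝ) / 2 * (1 - (1 - 2 * ((h : ℕ) : ℝ) / n)) = (h : ℕ) := by
      field_simp
      ring
    have hh : (h : ℕ) ≤ n := Nat.le_of_lt_succ h.isLt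
    simp only [eval_comp, eval_mul, eval_C, eval_sub, eval_one, eval_X, hnode]
    rw [hp h hh, eval_hypergeometricPoly_natCast hab hh]
  · have hlinear : (C ((n : ℝ) / 2) * (1 - X)).natDegree ≤ 1 := by compute_degree
    have hcomp : ((hypergeometricPoly n a b).comp (C ((n : ℝ) / 2) * (1 - X))).natDegree ≤ n :=
      natDegree_comp_le.trans <| (mul_le_of_le_one_right' hlinear).trans <|
        (natDegree_hypergeometricPoly_le n a b).trans hab
    rw [Fintype.card_fin]
    exact Nat.lt_succ_of_le (max_le hdeg hcomp)

end HypergeometricPoly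

theorem stmt11_general (n K w : ℕ) (hn : 0 < n) (hw : w ≤ K) (hKw : K + w ≤ n)
    (hKw' : 2 * K ≤ n + w) (p : Polynomial ℝ) (hdeg : p.natDegree ≤ n)
    (hp : ∀ h : ℕ, h ≤ n → p.eval (1 - 2 * (h : ℝ) / (n : ℝ)) = pval n K w h) :
    ∀ t : ℝ, -1 ≤ t → t ≤ 1 → |p.eval t| ≤ 2 := by
  intro t ht₁ ht₂
  obtain ⟨b, rfl⟩ := Nat.exists_eq_add_of_le hw
  have hrange : 0 ≤ (n : ℝ) * (1 + t) := mul_nonneg n.cast_nonneg (by linarith)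
  rw [eq_hypergeometricPoly_comp hn (by omega) hdeg hp]
  simp only [eval_comp, eval_mul, eval_C, eval_sub, eval_one, eval_X]
  exact abs_eval_hypergeometricPoly_le_two (by omega) (by omega)
    (mul_nonneg (by positivity) (by linarith)) (by linarith)

theorem stmt11 (n K w : ℕ) (hK : 1 ≤ K) (hw : w ≤ K) (hn : 64 * K ≤ n)
    (p : Polynomial ℝ) (hdeg : p.natDegree ≤ K)
    (hp : ∀ h : ℕ, h ≤ n → p.eval (1 - 2 * (h : ℝ) / (n : ℝ)) = pval n K w h) :
    ∀ t : ℝ, -1 ≤ t → t ≤ 1 → |p.eval t| ≤ 2 :=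
  stmt11_general n K w (by omega) hw (by omega) (by omega) p (by omega) hp
end

section
/- Let K ≥ 1 and let z_1, …, z_K be real numbers. Define the univariate real polynomial g(s) = ∏_{j=1}^{K} (s² − 2·z_j·s + 1)/2, of degree 2K, and let a_i denote the coefficient of s^i in g for 0 ≤ i ≤ 2K. Then for all real t, ∏_{j=1}^{K} (t − z_j) = Σ_{i=0}^{2K} a_i · T_{|i − K|}(t), where T_m denotes the degree-m Chebyshev polynomial of the first kind. In particular, the d-th Chebyshev coefficient of ∏_{j=1}^{K}(t − z_j) (in the expansion Σ_{d=−K}^{K} c_d T_d with c_{−d} = c_d) is the (K+d)-th regular coefficient of g. -/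
open Polynomial

/-!
Send the Laurent monomial `s ^ d` to `T_d`. By the three-term recurrence, multiplication by
`(s + s⁻¹) / 2` on the Laurent side becomes multiplication by the variable on the Chebyshev side,
so multiplication by `(s + s⁻¹) / 2 - z = s⁻¹ (s ^ 2 - 2 z s + 1) / 2` becomes multiplication by
`X - z`. Multiplying `K` such factors, starting from `1 ↦ T_0 = 1`, gives the expansion; the factor
`s ^ (-K)` accounts for the index shift.
-/

section ChebyshevExpansion

variable {R : Type*} [CommRing R]

/-- The Chebyshev expansion attached to the Laurent polynomial `s ^ (-m) * p(s)`: the linear map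
sending `X ^ i` to `T_{i - m}`. Carrying the shift `m` as a parameter avoids Laurent polynomials. -/
noncomputable def chebyshevExpansion (m : ℤ) : R[X] →ₗ[R] R[X] :=
  lsum fun i ↦ LinearMap.toSpanSingleton R R[X] (Chebyshev.T R (i - m))

lemma chebyshevExpansion_monomial (m : ℤ) (i : ℕ) (a : R) :
    chebyshevExpansion m (monomial i a) = a • Chebyshev.T R (i - m) := by
  simp [chebyshevExpansion, lsum_apply, sum_monomial_index]

lemma chebyshevExpansion_eq_sum_range (m : ℤ) {p : R[X]} {n : ℕ} (hp : p.natDegree < n) :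
    chebyshevExpansion m p = ∑ i ∈ Finset.range n, p.coeff i • Chebyshev.T R (i - m) := by
  simp [chebyshevExpansion, lsum_apply, sum_over_range' p _ n hp]

lemma chebyshevExpansion_zero_one : chebyshevExpansion 0 (1 : R[X]) = 1 := by
  simpa using chebyshevExpansion_monomial 0 0 (1 : R)

lemma chebyshevExpansion_C_mul (m : ℤ) (a : R) (p : R[X]) :
    chebyshevExpansion m (C a * p) = C a * chebyshevExpansion m p := by
  simp only [← smul_eq_C_mul, map_smul]

lemma chebyshevExpansion_add_one_X_mul (m : ℤ) (p : R[X]) :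
    chebyshevExpansion (m + 1) (X * p) = chebyshevExpansion m p := by
  induction p using Polynomial.induction_on' with
  | add p q hp hq => rw [mul_add, map_add, map_add, hp, hq]
  | monomial i a => simp [X_mul_monomial, chebyshevExpansion_monomial]

lemma chebyshevExpansion_add_one_X_sq_add_one_mul (m : ℤ) (p : R[X]) :
    chebyshevExpansion (m + 1) ((X ^ 2 + 1) * p) = 2 * X * chebyshevExpansion m p := by
  induction p using Polynomial.induction_on' with
  | add p q hp hq => rw [mul_add, map_add, map_add, hp, hq, mul_add]
  | monomial i a =>
    have recurrence : Chebyshev.T R (i - m + 1) + Chebyshev.T R (i - m - 1) =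
        2 * X * Chebyshev.T R (i - m) := by
      rw [Chebyshev.T_add_one, sub_add_cancel]
    have index_add_two : ((i + 2 : ℕ) : ℤ) - (m + 1) = i - m + 1 := by push_cast; ring
    rw [add_mul, one_mul, X_pow_mul_monomial, map_add]
    simp only [chebyshevExpansion_monomial]
    rw [index_add_two, ← sub_sub, ← smul_add, recurrence, mul_smul_comm]

lemma chebyshevExpansion_add_one_half_mul [Invertible (2 : R)] (m : ℤ) (z : R) (p : R[X]) :
    chebyshevExpansion (m + 1) (C ⅟2 * (X ^ 2 - C (2 * z) * X + 1) * p) =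
      (X - C z) * chebyshevExpansion m p := by
  have half_mul_two : (C ⅟2 * 2 : R[X]) = 1 := by
    rw [← C_ofNat, ← C_mul, invOf_mul_self, C_1]
  have split : C ⅟2 * (X ^ 2 - C (2 * z) * X + 1) * p =
      C ⅟2 * ((X ^ 2 + 1) * p) - C z * (X * p) := by
    rw [C_mul, C_ofNat]
    linear_combination -(C z * X * p) * half_mul_two
  rw [split, map_sub, chebyshevExpansion_C_mul, chebyshevExpansion_C_mul,
    chebyshevExpansion_add_one_X_sq_add_one_mul, chebyshevExpansion_add_one_X_mul]
  linear_combination X * chebyshevExpansion m p * half_mul_two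

variable {ι : Type*}

lemma chebyshevExpansion_card_prod [Invertible (2 : R)] (s : Finset ι) (z : ι → R) :
    chebyshevExpansion s.card (∏ j ∈ s, C ⅟2 * (X ^ 2 - C (2 * z j) * X + 1)) =
      ∏ j ∈ s, (X - C (z j)) := by
  induction s using Finset.cons_induction with
  | empty => simpa using chebyshevExpansion_zero_one
  | cons j s hj ih =>
    rw [Finset.prod_cons, Finset.prod_cons, Finset.card_cons, Nat.cast_succ,
      chebyshevExpansion_add_one_half_mul, ih]

lemma natDegree_prod_C_mul_quadratic_le (s : Finset ι) (a b : ι → R) :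
    (∏ j ∈ s, C (a j) * (X ^ 2 - C (b j) * X + 1)).natDegree ≤ 2 * s.card := by
  have natDegree_factor_le (j : ι) : (C (a j) * (X ^ 2 - C (b j) * X + 1)).natDegree ≤ 2 := by
    compute_degree
  calc
    _ ≤ ∑ j ∈ s, (C (a j) * (X ^ 2 - C (b j) * X + 1)).natDegree := natDegree_prod_le _ _
    _ ≤ s.card • 2 := Finset.sum_le_card_nsmul _ _ _ fun j _ ↦ natDegree_factor_le j
    _ = 2 * s.card := by rw [smul_eq_mul, mul_comm]

theorem stmt12_general [Invertible (2 : R)] (s : Finset ι) (z : ι → R) :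
    ∏ j ∈ s, (X - C (z j)) =
      ∑ i ∈ Finset.range (2 * s.card + 1),
        (∏ j ∈ s, C ⅟2 * (X ^ 2 - C (2 * z j) * X + 1)).coeff i •
          Chebyshev.T R ((i : ℤ) - s.card) := by
  rw [← chebyshevExpansion_card_prod]
  exact chebyshevExpansion_eq_sum_range _ <|
    Nat.lt_succ_of_le (natDegree_prod_C_mul_quadratic_le s _ _)

end ChebyshevExpansion

theorem stmt12 (K : ℕ) (hK : 1 ≤ K) (z : Fin K → ℝ)
    (g : Polynomial ℝ)
    (hg : g = ∏ j : Fin K,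
      Polynomial.C (1 / 2 : ℝ) * (X ^ 2 - Polynomial.C (2 * z j) * X + 1)) :
    ∀ t : ℝ,
      (∏ j : Fin K, (t - z j)) =
        ∑ i ∈ Finset.range (2 * K + 1),
          g.coeff i * (Polynomial.Chebyshev.T ℝ ((i : ℤ) - (K : ℤ))).eval t := by
  intro t
  simpa [hg, eval_prod, eval_finsetSum] using congrArg (eval t) (stmt12_general Finset.univ z)
end

section
/- Let n, K, w be integers with 1 ≤ K, 0 ≤ w ≤ K/2, and n ≥ 64K, and let Z_w = {−1 + 2h/n : h = 0,…,K−w−1} ∪ {1 − 2h/n : h = 0,…,w−1}. Then for every δ ≥ 0 and every real s with 0 ≤ s ≤ 1 − w/(16K): ∏_{z∈Z_w} ((s − z)² + δ(1 − z²)) ≤ e^{65·δ·K} · ∏_{z∈Z_w} (s − z)². -/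
open Finset

/-- The zeros `Z_w = {-1 + 2h/n : 0 ≤ h < K - w} ∪ {1 - 2h/n : 0 ≤ h < w}`, with the
product `∏_{z ∈ Z_w} ((s - z)² + δ·(1 - z²))` taken over them. -/
noncomputable def Pprod (n K w : ℕ) (δ s : ℝ) : ℝ :=
  (∏ h ∈ Finset.range (K - w),
      ((s - (-1 + 2 * (h : ℝ) / (n : ℝ))) ^ 2 + δ * (1 - (-1 + 2 * (h : ℝ) / (n : ℝ)) ^ 2))) *
  (∏ h ∈ Finset.range w,
      ((s - (1 - 2 * (h : ℝ) / (n : ℝ))) ^ 2 + δ * (1 - (1 - 2 * (h : ℝ) / (n : ℝ)) ^ 2)))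

/-!
If `1 - z² ≤ c (s - z)²`, then the factor at `z` is at most `(1 + δ c) (s - z)² ≤ e^{δ c} (s - z)²`.
The zeros near `-1` are far from `s ≥ 0`, so `c = 1` works for each of them and together they
contribute at most `e^{δ K}`. The `w` zeros near `1` lie within `w / (32 K)` of `1`, while `s` is at
distance at least `w / (16 K)` from `1`; hence `c = 64 K / w` works for each of them and together
they contribute at most `e^{64 δ K}`.
-/

lemma add_mul_le_exp_mul {a b c δ : ℝ} (hδ : 0 ≤ δ) (ha : 0 ≤ a) (hbc : b ≤ c * a) :
    a + δ * b ≤ Real.exp (δ * c) * a :=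
  calc a + δ * b ≤ a + δ * (c * a) := by gcongr
    _ = (δ * c + 1) * a := by ring
    _ ≤ Real.exp (δ * c) * a := by gcongr; exact Real.add_one_le_exp _

lemma sq_add_mul_one_sub_sq_nonneg {z δ : ℝ} (s : ℝ) (hδ : 0 ≤ δ) (hz : |z| ≤ 1) :
    0 ≤ (s - z) ^ 2 + δ * (1 - z ^ 2) :=
  add_nonneg (sq_nonneg _)
    (mul_nonneg hδ (sub_nonneg.2 ((sq_le_one_iff_abs_le_one _).2 hz)))

lemma prod_sq_add_mul_one_sub_sq_le {ι : Type*} (I : Finset ι) {z c : ι → ℝ} {δ s : ℝ}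
    (hδ : 0 ≤ δ) (hz : ∀ i ∈ I, |z i| ≤ 1) (hc : ∀ i ∈ I, 1 - z i ^ 2 ≤ c i * (s - z i) ^ 2) :
    ∏ i ∈ I, ((s - z i) ^ 2 + δ * (1 - z i ^ 2)) ≤
      Real.exp (δ * ∑ i ∈ I, c i) * ∏ i ∈ I, (s - z i) ^ 2 :=
  calc ∏ i ∈ I, ((s - z i) ^ 2 + δ * (1 - z i ^ 2))
      ≤ ∏ i ∈ I, Real.exp (δ * c i) * (s - z i) ^ 2 :=
        prod_le_prod (fun i hi => sq_add_mul_one_sub_sq_nonneg s hδ (hz i hi))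
          fun i hi => add_mul_le_exp_mul hδ (sq_nonneg _) (hc i hi)
    _ = Real.exp (δ * ∑ i ∈ I, c i) * ∏ i ∈ I, (s - z i) ^ 2 := by
        rw [prod_mul_distrib, ← Real.exp_sum, mul_sum]

lemma abs_one_sub_two_mul_div_le_one {h n : ℕ} (hhn : h ≤ n) : |1 - 2 * (h : ℝ) / n| ≤ 1 := by
  have hhn' : 2 * (h : ℝ) / n ≤ 2 :=
    div_le_of_le_mul₀ (by positivity) (by positivity) (by gcongr)
  exact abs_le.2 ⟨by linarith, sub_le_self _ (by positivity)⟩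

lemma one_sub_sq_le_sq_sub_of_near_neg_one {s t : ℝ} (ht : t ≤ 1 / 4) (hs : 0 ≤ s) :
    1 - (-1 + t) ^ 2 ≤ (s - (-1 + t)) ^ 2 :=
  calc 1 - (-1 + t) ^ 2 ≤ (1 - t) ^ 2 := by nlinarith
    _ ≤ (s - (-1 + t)) ^ 2 := pow_le_pow_left₀ (by linarith) (by linarith) 2

lemma one_sub_sq_le_mul_sq_sub_of_near_one {r s t : ℝ} (hr : 0 < r) (ht : t ≤ r)
    (hs : s ≤ 1 - 2 * r) : 1 - (1 - t) ^ 2 ≤ 2 / r * (s - (1 - t)) ^ 2 := by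
  have hdist : r ^ 2 ≤ (s - (1 - t)) ^ 2 := by
    rw [sub_sq_comm]
    gcongr
    linarith
  calc 1 - (1 - t) ^ 2 ≤ 2 * r := by nlinarith [sq_nonneg t]
    _ = 2 / r * r ^ 2 := by field_simp
    _ ≤ 2 / r * (s - (1 - t)) ^ 2 := by gcongr

lemma prod_near_neg_one_le {m n : ℕ} {δ s : ℝ} (hm : 8 * m ≤ n) (hδ : 0 ≤ δ) (hs : 0 ≤ s) :
    ∏ h ∈ range m, ((s - (-1 + 2 * (h : ℝ) / n)) ^ 2 + δ * (1 - (-1 + 2 * (h : ℝ) / n) ^ 2)) ≤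
      Real.exp (δ * m) * ∏ h ∈ range m, (s - (-1 + 2 * (h : ℝ) / n)) ^ 2 := by
  have hhn : ∀ h ∈ range m, 8 * h ≤ n := fun h hh => by
    have := mem_range.1 hh
    omega
  have hz : ∀ h ∈ range m, |-1 + 2 * (h : ℝ) / n| ≤ 1 := fun h hh => by
    rw [neg_add_eq_sub, abs_sub_comm]
    exact abs_one_sub_two_mul_div_le_one (by have := hhn h hh; omega)
  have hoffset : ∀ h ∈ range m, 2 * (h : ℝ) / n ≤ 1 / 4 := fun h hh => by
    have : 8 * (h : ℝ) ≤ n := by exact_mod_cast hhn h hh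
    exact div_le_of_le_mul₀ (by positivity) (by positivity) (by linarith)
  have hprod := prod_sq_add_mul_one_sub_sq_le (range m) (c := fun _ => 1) (s := s) hδ hz
    fun h hh => by
      rw [one_mul]
      exact one_sub_sq_le_sq_sub_of_near_neg_one (hoffset h hh) hs
  rwa [sum_const, card_range, nsmul_one] at hprod

lemma prod_near_one_le {n w : ℕ} {κ δ s : ℝ} (hκn : 2 * κ ≤ n) (hwκ : w ≤ 2 * κ) (hδ : 0 ≤ δ)
    (hs : s ≤ 1 - 2 * (w / κ)) :
    ∏ h ∈ range w, ((s - (1 - 2 * (h : ℝ) / n)) ^ 2 + δ * (1 - (1 - 2 * (h : ℝ) / n) ^ 2)) ≤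
      Real.exp (δ * (2 * κ)) * ∏ h ∈ range w, (s - (1 - 2 * (h : ℝ) / n)) ^ 2 := by
  obtain rfl | hw := w.eq_zero_or_pos
  · simpa using mul_nonneg hδ (by simpa using hwκ : 0 ≤ 2 * κ)
  have hw' : (0 : ℝ) < w := by exact_mod_cast hw
  have hκ : 0 < κ := by linarith
  have hwn : w ≤ n := by exact_mod_cast hwκ.trans hκn
  have hoffset : ∀ h ∈ range w, 2 * (h : ℝ) / n ≤ w / κ := fun h hh => by
    have hhw : (h : ℝ) ≤ w := by exact_mod_cast (mem_range.1 hh).le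
    calc 2 * (h : ℝ) / n ≤ 2 * w / (2 * κ) := by gcongr
      _ = w / κ := mul_div_mul_left _ _ two_ne_zero
  have hprod := prod_sq_add_mul_one_sub_sq_le (range w) hδ
    (fun h hh => abs_one_sub_two_mul_div_le_one ((mem_range.1 hh).le.trans hwn))
    fun h hh => one_sub_sq_le_mul_sq_sub_of_near_one (div_pos hw' hκ) (hoffset h hh) hs
  have hexponent : (w : ℝ) * (2 / (w / κ)) = 2 * κ := by field_simp
  rwa [sum_const, card_range, nsmul_eq_mul, hexponent] at hprod

lemma Pprod_zero (n K w : ℕ) (s : ℝ) :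
    Pprod n K w 0 s = (∏ h ∈ range (K - w), (s - (-1 + 2 * (h : ℝ) / n)) ^ 2) *
      ∏ h ∈ range w, (s - (1 - 2 * (h : ℝ) / n)) ^ 2 := by
  simp only [Pprod, zero_mul, add_zero]

theorem stmt15_general (n K w : ℕ) (hw : w ≤ K) (hn : 64 * K ≤ n)
    (δ : ℝ) (hδ : 0 ≤ δ) (s : ℝ) (hs0 : 0 ≤ s) (hs1 : s ≤ 1 - (w : ℝ) / (16 * K)) :
    Pprod n K w δ s ≤ Real.exp (65 * δ * K) * Pprod n K w 0 s := by
  have hn' : 2 * (32 * (K : ℝ)) ≤ n := by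
    exact_mod_cast (by omega : 2 * (32 * K) ≤ n)
  have hwK : (w : ℝ) ≤ 2 * (32 * K) := by exact_mod_cast (by omega : w ≤ 2 * (32 * K))
  have hs1' : s ≤ 1 - 2 * (w / (32 * K)) := by
    convert hs1 using 2
    ring
  have hleft := prod_near_neg_one_le (by omega : 8 * (K - w) ≤ n) hδ hs0
  have hright := prod_near_one_le hn' hwK hδ hs1'
  have hright_nonneg := prod_nonneg fun h (hh : h ∈ range w) =>
    sq_add_mul_one_sub_sq_nonneg s hδ
      (abs_one_sub_two_mul_div_le_one (by have := mem_range.1 hh; omega : h ≤ n))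
  have hexponent : δ * (K - w : ℕ) + δ * (2 * (32 * K)) ≤ 65 * δ * K := by
    have : δ * (K - w : ℕ) ≤ δ * K := by gcongr; exact Nat.sub_le K w
    linarith
  calc Pprod n K w δ s
      ≤ Real.exp (δ * (K - w : ℕ) + δ * (2 * (32 * K))) * Pprod n K w 0 s := by
        rw [Real.exp_add, Pprod_zero, mul_mul_mul_comm]
        exact mul_le_mul hleft hright hright_nonneg (by positivity)
    _ ≤ Real.exp (65 * δ * K) * Pprod n K w 0 s := by
        rw [Pprod_zero]
        gcongr

theorem stmt15 (n K w : ℕ) (hK : 1 ≤ K) (hw : 2 * w ≤ K) (hn : 64 * K ≤ n)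
    (δ : ℝ) (hδ : 0 ≤ δ) (s : ℝ) (hs0 : 0 ≤ s) (hs1 : s ≤ 1 - (w : ℝ) / (16 * K)) :
    Pprod n K w δ s ≤ Real.exp (65 * δ * K) * Pprod n K w 0 s :=
  stmt15_general n K w (by omega) hn δ hδ s hs0 hs1
end

section
/- Let n, K, w, h be integers with 1 ≤ w ≤ K ≤ n and 0 ≤ h ≤ w·n/(e²·K). Then the probability that a uniformly random string in {0,1}^n of Hamming weight h has exactly w ones among its first K coordinates is at most e^{−w}; that is, C(K,w)·C(n−K,h−w)/C(n,h) ≤ e^{−w} (where binomial coefficients with out-of-range arguments are 0). -/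
/-!
A fixed set of `w` coordinates consists only of ones with probability
`C(n-w,h-w) / C(n,h) = C(h,w) / C(n,w) ≤ (h/n)^w`. A union bound over the `w`-subsets of the first
`K` coordinates gives `pval n K w h ≤ C(K,w) (h/n)^w ≤ (Kh/n)^w / w! ≤ (e · (Kh/n) / w)^w`, and the
hypothesis on `h` says exactly that the base of the last power is at most `e⁻¹`.
-/

theorem descFactorial_mul_pow_le_descFactorial_mul_pow {m n : ℕ} (hmn : m ≤ n) (k : ℕ) :
    m.descFactorial k * n ^ k ≤ n.descFactorial k * m ^ k := by
  induction k with
  | zero => simp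
  | succ k ih =>
    have factor_le : (m - k) * n ≤ (n - k) * m := by
      rw [Nat.sub_mul, Nat.sub_mul, Nat.mul_comm n m]
      exact Nat.sub_le_sub_left (Nat.mul_le_mul_left k hmn) _
    calc m.descFactorial (k + 1) * n ^ (k + 1)
        = ((m - k) * n) * (m.descFactorial k * n ^ k) := by
          rw [Nat.descFactorial_succ]; ring
      _ ≤ ((n - k) * m) * (n.descFactorial k * m ^ k) := Nat.mul_le_mul factor_le ih
      _ = n.descFactorial (k + 1) * m ^ (k + 1) := by
          rw [Nat.descFactorial_succ]; ring

theorem choose_mul_pow_le_choose_mul_pow {m n : ℕ} (hmn : m ≤ n) (k : ℕ) :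
    m.choose k * n ^ k ≤ n.choose k * m ^ k := by
  have h := descFactorial_mul_pow_le_descFactorial_mul_pow hmn k
  simp only [Nat.descFactorial_eq_factorial_mul_choose, mul_assoc] at h
  exact Nat.le_of_mul_le_mul_left h k.factorial_pos

theorem choose_sub_sub_mul_pow_le {k m n : ℕ} (hkm : k ≤ m) (hmn : m ≤ n) :
    (n - k).choose (m - k) * n ^ k ≤ n.choose m * m ^ k := by
  refine Nat.le_of_mul_le_mul_left ?_ (Nat.choose_pos (hkm.trans hmn))
  calc n.choose k * ((n - k).choose (m - k) * n ^ k)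
      = n.choose m * (m.choose k * n ^ k) := by
        rw [← mul_assoc, ← Nat.choose_mul hkm, mul_assoc]
    _ ≤ n.choose m * (n.choose k * m ^ k) :=
        Nat.mul_le_mul_left _ (choose_mul_pow_le_choose_mul_pow hmn k)
    _ = n.choose k * (n.choose m * m ^ k) := by ring

theorem choose_sub_sub_div_choose_le_div_pow {k m n : ℕ} (hkm : k ≤ m) (hmn : m ≤ n) :
    ((n - k).choose (m - k) : ℝ) / n.choose m ≤ ((m : ℝ) / n) ^ k := by
  have choose_nm_pos : (0 : ℝ) < n.choose m := mod_cast Nat.choose_pos hmn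
  have n_pow_pos : (0 : ℝ) < (n : ℝ) ^ k := by
    rcases k.eq_zero_or_pos with rfl | hk
    · simp
    · have : 0 < n := by lia
      positivity
  rw [div_pow, div_le_div_iff₀ choose_nm_pos n_pow_pos, mul_comm ((m : ℝ) ^ k)]
  exact_mod_cast choose_sub_sub_mul_pow_le hkm hmn

theorem pow_div_factorial_le_exp_one_mul_div_pow {x : ℝ} (hx : 0 ≤ x) (k : ℕ) :
    x ^ k / k.factorial ≤ (Real.exp 1 * (x / k)) ^ k := by
  rcases k.eq_zero_or_pos with rfl | hk
  · simp
  calc x ^ k / k.factorial = (k : ℝ) ^ k / k.factorial * (x / k) ^ k := by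
        rw [div_pow]; field_simp
    _ ≤ Real.exp k * (x / k) ^ k := by
        gcongr
        exact Real.pow_div_factorial_le_exp _ k.cast_nonneg k
    _ = (Real.exp 1 * (x / k)) ^ k := by rw [mul_pow, Real.exp_one_pow]

theorem pval_le_choose_mul_div_pow (n K w h : ℕ) :
    pval n K w h ≤ K.choose w * ((h : ℝ) / n) ^ w := by
  unfold pval
  split_ifs with hwh
  swap
  · positivity
  rcases lt_or_ge K w with hKw | hwK
  · simp [Nat.choose_eq_zero_of_lt hKw]
  rcases lt_or_ge n h with hnh | hhn
  · rw [Nat.choose_eq_zero_of_lt hnh, Nat.cast_zero, div_zero]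
    positivity
  rw [mul_div_assoc]
  gcongr
  calc ((n - K).choose (h - w) : ℝ) / n.choose h
      ≤ (n - w).choose (h - w) / n.choose h := by gcongr
    _ ≤ ((h : ℝ) / n) ^ w := choose_sub_sub_div_choose_le_div_pow hwh hhn

theorem pval_le_exp_one_mul_mean_div_pow (n K w h : ℕ) :
    pval n K w h ≤ (Real.exp 1 * ((K * h / n : ℝ) / w)) ^ w :=
  calc pval n K w h ≤ K.choose w * ((h : ℝ) / n) ^ w := pval_le_choose_mul_div_pow n K w h
    _ ≤ (K : ℝ) ^ w / w.factorial * ((h : ℝ) / n) ^ w := by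
        gcongr
        exact Nat.choose_le_pow_div w K
    _ = (K * h / n : ℝ) ^ w / w.factorial := by rw [mul_div_assoc, mul_pow]; ring
    _ ≤ (Real.exp 1 * ((K * h / n : ℝ) / w)) ^ w :=
        pow_div_factorial_le_exp_one_mul_div_pow (by positivity) w

theorem stmt16 (n K w h : ℕ) (hw : 1 ≤ w) (hwK : w ≤ K) (hKn : K ≤ n)
    (hh : (h : ℝ) ≤ (w : ℝ) * (n : ℝ) / (Real.exp 2 * (K : ℝ))) :
    pval n K w h ≤ Real.exp (-(w : ℝ)) := by
  have hK : 0 < K := hw.trans hwK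
  have hn : 0 < n := hK.trans_le hKn
  have base_le : Real.exp 1 * ((K * h / n : ℝ) / w) ≤ Real.exp (-1) :=
    calc Real.exp 1 * ((K * h / n : ℝ) / w)
        ≤ Real.exp 1 * ((K * (w * n / (Real.exp 2 * K)) / n : ℝ) / w) := by gcongr
      _ = Real.exp 1 / Real.exp 2 := by field_simp
      _ = Real.exp (-1) := by rw [← Real.exp_sub]; norm_num
  calc pval n K w h ≤ (Real.exp 1 * ((K * h / n : ℝ) / w)) ^ w :=
        pval_le_exp_one_mul_mean_div_pow n K w h
    _ ≤ Real.exp (-1) ^ w := by gcongr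
    _ = Real.exp (-(w : ℝ)) := by rw [← Real.exp_nat_mul, mul_neg_one]
end
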